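/- Let u ∈ 𝒰_Ω with u not identically zero, let [c, d] be the orthogonal projection of Ω onto the y-axis, w = d − c, and M = max_{(x,y)∈Ω} u(x,y). Then ‖u_x‖₁ = w·M holds if and only if there exist a point of maximum z ∈ Ω of u, a lower point 𝐜 ∈ Ω (a point of Ω whose y-coordinate equals c) and an upper point 𝐝 ∈ Ω (a point of Ω whose y-coordinate equals d) such that u is affine on each of the two segments [z, 𝐜] and [z, 𝐝], and every point of these two segments is a point of maximum of the restriction of u to the horizontal line through that point intersected with Ω. -/

import Mathlib

open Set MeasureTheory
open scoped ENNReal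

/-- Partial derivative of `u` in the `x` direction (junk value where `u` is not
differentiable). -/
noncomputable def ux (u : ℝ × ℝ → ℝ) (z : ℝ × ℝ) : ℝ := fderiv ℝ u z (1, 0)

/-- Partial derivative of `u` in the `y` direction. -/
noncomputable def uy (u : ℝ × ℝ → ℝ) (z : ℝ × ℝ) : ℝ := fderiv ℝ u z (0, 1)

/-- Directional derivative of `u` in the direction `h`. -/
noncomputable def uh (h : ℝ × ℝ) (u : ℝ × ℝ → ℝ) (z : ℝ × ℝ) : ℝ := fderiv ℝ u z h

/-- The class `𝒰_Ω`: continuous concave functions on `Ω` vanishing on the boundary,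
with uniformly bounded gradient over all interior points where it exists. -/
def MemU (Ω : Set (ℝ × ℝ)) (u : ℝ × ℝ → ℝ) : Prop :=
  ContinuousOn u Ω ∧ ConcaveOn ℝ Ω u ∧ (∀ z ∈ frontier Ω, u z = 0) ∧
    ∃ C : ℝ, ∀ z ∈ interior Ω, ∀ g : (ℝ × ℝ) →L[ℝ] ℝ, HasFDerivAt u g z → ‖g‖ ≤ C

/-- The `L¹` norm of `f` over `Ω`. -/
noncomputable def L1N (Ω : Set (ℝ × ℝ)) (f : ℝ × ℝ → ℝ) : ℝ := ∫ z in Ω, |f z|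

/-- The `L^p` norm of `f` over `Ω`, `p ∈ [1, ∞)`. -/
noncomputable def LpN (Ω : Set (ℝ × ℝ)) (p : ℝ) (f : ℝ × ℝ → ℝ) : ℝ :=
  (∫ z in Ω, |f z| ^ p) ^ (1 / p)

/-- The `L^∞` norm (essential supremum) of `f` over `Ω`. -/
noncomputable def LinfN (Ω : Set (ℝ × ℝ)) (f : ℝ × ℝ → ℝ) : ℝ≥0∞ :=
  essSup (fun z => ENNReal.ofReal |f z|) (volume.restrict Ω)

/-- The width of `Ω` parallel to the (Euclidean unit) vector `h`: the distance between the
two lines of support of `Ω` parallel to `h`, i.e. the oscillation over `Ω` of the linear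
functional given by the unit normal `(-h.2, h.1)` to `h`. -/
noncomputable def widthPar (Ω : Set (ℝ × ℝ)) (h : ℝ × ℝ) : ℝ :=
  sSup ((fun z : ℝ × ℝ => -h.2 * z.1 + h.1 * z.2) '' Ω) -
    sInf ((fun z : ℝ × ℝ => -h.2 * z.1 + h.1 * z.2) '' Ω)

/-!
Let `m y` be the maximum of `u` on the horizontal slice of `Ω` at height `y`. The restriction of `u`
to almost every such slice increases from `0` to `m y` and then decreases back to `0`, so it has
variation `2 * m y`, and integrating over `y` gives `‖u_x‖₁ = 2 * ∫ m`. The function `m` is concave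
and vanishes at `c` and `d`. If `m y₀ = M`, the trapezoid bounds on `[c, y₀]` and `[y₀, d]` give
`2 * ∫ m ≥ (d - c) * M`, with equality iff `m` is affine on both intervals. Finally, for fibre
maximizers `z` and `p`, concavity squeezes `u` on `[z, p]` between its chord and `m`, hence `m` is
affine between their heights iff `u` is affine on `[z, p]` and attains `m` along it.
-/

/-- `f` is affine along the segment from `a` to `b`, parametrised by `t ↦ (1 - t) • a + t • b`. The
segment may be a single point. -/
def IsAffineOnSegment {E : Type*} [AddCommGroup E] [Module ℝ E] (f : E → ℝ) (a b : E) : Prop :=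
  ∀ t ∈ Icc (0 : ℝ) 1, f ((1 - t) • a + t • b) = (1 - t) * f a + t * f b

/-- Every point of the segment from `z` to `p` maximizes `u` on the slice of `Ω` on which the second
coordinate is constant. -/
def IsFiberMaxOnSegment {E F : Type*} [AddCommGroup E] [Module ℝ E] [AddCommGroup F] [Module ℝ F]
    (u : E × F → ℝ) (Ω : Set (E × F)) (z p : E × F) : Prop :=
  ∀ t ∈ Icc (0 : ℝ) 1, ∀ q ∈ Ω, q.2 = ((1 - t) • z + t • p).2 → u q ≤ u ((1 - t) • z + t • p)

/-- The partial maximum of `u` over the slices of `Ω` on which the second coordinate is constant.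
It is `0` at a `y` whose slice is empty, because `sSup ∅ = 0`. -/
noncomputable def fiberMax {E F : Type*} (u : E × F → ℝ) (Ω : Set (E × F)) (y : F) : ℝ :=
  sSup (u '' {q ∈ Ω | q.2 = y})

section Regularity

variable {E : Type*} [NormedAddCommGroup E] [NormedSpace ℝ E] [FiniteDimensional ℝ E]
  [MeasurableSpace E] [BorelSpace E] (μ : Measure E) [μ.IsAddHaarMeasure] {s : Set E} {f : E → ℝ}

theorem ae_mem_interior_of_convex (hs : Convex ℝ s) : ∀ᵐ x ∂μ, x ∈ s → x ∈ interior s := by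
  filter_upwards [measure_eq_zero_iff_ae_notMem.1 (hs.addHaar_frontier μ)] with x hx hxs
  by_contra hxi
  exact hx ⟨subset_closure hxs, hxi⟩

theorem ae_differentiableAt_of_concaveOn (hf : ConcaveOn ℝ s f) :
    ∀ᵐ x ∂μ, x ∈ s → DifferentiableAt ℝ f x := by
  suffices h : μ {x | x ∈ interior s ∧ ¬DifferentiableAt ℝ f x} = 0 by
    filter_upwards [measure_eq_zero_iff_ae_notMem.1 h, ae_mem_interior_of_convex μ hf.1]
      with x hx hxi hxs
    by_contra hd
    exact hx ⟨hxi hxs, hd⟩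
  refine measure_null_of_locally_null _ fun x hx => ?_
  obtain ⟨K, t, ht, hLip⟩ := hf.locallyLipschitzOn_interior hx.1
  rw [isOpen_interior.nhdsWithin_eq hx.1] at ht
  refine ⟨interior t ∩ {y | y ∈ interior s ∧ ¬DifferentiableAt ℝ f y},
    Filter.inter_mem (mem_nhdsWithin_of_mem_nhds (interior_mem_nhds.2 ht)) self_mem_nhdsWithin, ?_⟩
  refine measure_mono_null ?_ (ae_iff.1 (hLip.ae_differentiableWithinAt_of_mem (μ := μ)))
  rintro y ⟨hyt, -, hnot⟩ hy
  exact hnot ((hy (interior_subset hyt)).differentiableAt (mem_interior_iff_mem_nhds.1 hyt))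

variable {μ} in
theorem integrableOn_of_concaveOn_of_abs_le (hs : Bornology.IsBounded s) (hf : ConcaveOn ℝ s f)
    {C : ℝ} (hC : ∀ x ∈ s, |f x| ≤ C) : IntegrableOn f s μ := by
  have hcongr : interior s =ᵐ[μ] s :=
    interior_ae_eq_of_null_frontier (hf.1.addHaar_frontier μ)
  refine IntegrableOn.congr_set_ae ?_ hcongr.symm
  refine IntegrableOn.of_bound (C := C) (hs.subset interior_subset).measure_lt_top ?_ ?_
  · exact hf.continuousOn_interior.aestronglyMeasurable isOpen_interior.measurableSet
  · exact ae_restrict_of_forall_mem isOpen_interior.measurableSet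
      fun x hx => hC x (interior_subset hx)

end Regularity

section Interval

variable {f : ℝ → ℝ} {s : Set ℝ} {a b x₀ : ℝ}

theorem intervalIntegrable_of_concaveOn (hf : ConcaveOn ℝ (uIcc a b) f) :
    IntervalIntegrable f volume a b := by
  have hmin : ∀ x ∈ uIcc a b, min (f a) (f b) ≤ f x := fun x hx =>
    hf.ge_on_segment left_mem_uIcc right_mem_uIcc (segment_eq_uIcc a b ▸ hx)
  have hmax : ∀ x ∈ uIcc a b, f x ≤ 2 * f ((a + b) / 2) - min (f a) (f b) := by
    intro x hx
    -- The midpoint value controls `f` at `x` and at its reflection `a + b - x` together.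
    have hx' : a + b - x ∈ uIcc a b := by
      rw [mem_uIcc] at hx ⊢
      grind
    have hmid := hf.2 hx hx' (show (0 : ℝ) ≤ 1 / 2 by norm_num) (show (0 : ℝ) ≤ 1 / 2 by norm_num)
      (by norm_num)
    have hcenter : (1 / 2 : ℝ) • x + (1 / 2 : ℝ) • (a + b - x) = (a + b) / 2 := by
      simp only [smul_eq_mul]
      ring
    rw [hcenter, smul_eq_mul, smul_eq_mul] at hmid
    linarith [hmin _ hx']
  rw [intervalIntegrable_iff']
  refine integrableOn_of_concaveOn_of_abs_le (Metric.isBounded_Icc _ _) hf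
    (C := |min (f a) (f b)| + |2 * f ((a + b) / 2) - min (f a) (f b)|) fun x hx => ?_
  rw [abs_le]
  grind

theorem monotoneOn_inter_Iic_of_concaveOn_of_isMaxOn (hf : ConcaveOn ℝ s f) (hx₀ : x₀ ∈ s)
    (hmax : IsMaxOn f s x₀) : MonotoneOn f (s ∩ Iic x₀) := by
  intro x hx y hy hxy
  have hle : f x ≤ f x₀ := hmax hx.1
  simpa only [min_eq_left hle] using hf.min_le_of_mem_Icc hx.1 hx₀ ⟨hxy, hy.2⟩

theorem antitoneOn_inter_Ici_of_concaveOn_of_isMaxOn (hf : ConcaveOn ℝ s f) (hx₀ : x₀ ∈ s)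
    (hmax : IsMaxOn f s x₀) : AntitoneOn f (s ∩ Ici x₀) := by
  intro x hx y hy hxy
  have hle : f y ≤ f x₀ := hmax hy.1
  simpa only [min_eq_right hle] using hf.min_le_of_mem_Icc hx₀ hy.1 ⟨hx.2, hxy⟩

theorem intervalIntegrable_deriv_of_concaveOn_of_isMaxOn (hf : ConcaveOn ℝ (Icc a b) f)
    (hx₀ : x₀ ∈ Icc a b) (hmax : IsMaxOn f (Icc a b) x₀) :
    IntervalIntegrable (deriv f) volume a b := by
  have hmono : MonotoneOn f (uIcc a x₀) :=
    (monotoneOn_inter_Iic_of_concaveOn_of_isMaxOn hf hx₀ hmax).mono <| by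
      rw [uIcc_of_le hx₀.1]
      exact subset_inter (Icc_subset_Icc_right hx₀.2) Icc_subset_Iic_self
  have hanti : AntitoneOn f (uIcc x₀ b) :=
    (antitoneOn_inter_Ici_of_concaveOn_of_isMaxOn hf hx₀ hmax).mono <| by
      rw [uIcc_of_le hx₀.2]
      exact subset_inter (Icc_subset_Icc_left hx₀.1) Icc_subset_Ici_self
  have hneg : IntervalIntegrable (deriv (-f)) volume x₀ b := hanti.neg.intervalIntegrable_deriv
  rw [deriv.neg'] at hneg
  exact hmono.intervalIntegrable_deriv.trans (neg_neg (deriv f) ▸ hneg.neg)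

theorem integral_abs_deriv_of_monotoneOn (hab : a ≤ b) (hcont : ContinuousOn f (Icc a b))
    (hmono : MonotoneOn f (Icc a b))
    (hright : ∀ x ∈ Ioo a b, DifferentiableWithinAt ℝ f (Ioi x) x) :
    ∫ x in a..b, |deriv f x| = f b - f a := by
  have hae : (fun x => |deriv f x|) =ᵐ[volume.restrict (uIoc a b)]
      fun x => derivWithin f (Ioi x) x := by
    rw [uIoc_of_le hab, ← restrict_Ioo_eq_restrict_Ioc, Filter.EventuallyEq,
      ae_restrict_iff' measurableSet_Ioo]
    filter_upwards [hmono.ae_differentiableWithinAt_of_mem] with x hx hxI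
    have hnhds := Icc_mem_nhds hxI.1 hxI.2
    have hdiff := (hx (Ioo_subset_Icc_self hxI)).differentiableAt hnhds
    have hnonneg : 0 ≤ deriv f x := by
      rw [← derivWithin_of_mem_nhds hnhds]
      exact hmono.derivWithin_nonneg
    rw [abs_of_nonneg hnonneg, hdiff.derivWithin (uniqueDiffWithinAt_Ioi x)]
  have hint : IntervalIntegrable (deriv f) volume a b :=
    (uIcc_of_le hab ▸ hmono).intervalIntegrable_deriv
  rw [intervalIntegral.integral_congr_ae_restrict hae]
  exact intervalIntegral.integral_eq_sub_of_hasDeriv_right_of_le hab hcont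
    (fun x hx => (hright x hx).hasDerivWithinAt) (hint.abs.congr_ae hae)

theorem integral_abs_deriv_of_concaveOn (hcont : ContinuousOn f (Icc a b))
    (hf : ConcaveOn ℝ (Icc a b) f) (hx₀ : x₀ ∈ Icc a b) (hmax : IsMaxOn f (Icc a b) x₀) :
    ∫ x in a..b, |deriv f x| = 2 * f x₀ - f a - f b := by
  have hleft_subset : Icc a x₀ ⊆ Icc a b := Icc_subset_Icc_right hx₀.2
  have hright_subset : Icc x₀ b ⊆ Icc a b := Icc_subset_Icc_left hx₀.1
  have hmono : MonotoneOn f (Icc a x₀) :=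
    (monotoneOn_inter_Iic_of_concaveOn_of_isMaxOn hf hx₀ hmax).mono
      (subset_inter hleft_subset Icc_subset_Iic_self)
  have hanti : AntitoneOn f (Icc x₀ b) :=
    (antitoneOn_inter_Ici_of_concaveOn_of_isMaxOn hf hx₀ hmax).mono
      (subset_inter hright_subset Icc_subset_Ici_self)
  have hdiff : ∀ x ∈ Ioo a b, DifferentiableWithinAt ℝ (-f) (Ioi x) x := fun x hx =>
    hf.neg.differentiableWithinAt_Ioi_of_mem_interior (by rwa [interior_Icc])
  have hleft : ∫ x in a..x₀, |deriv f x| = f x₀ - f a :=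
    integral_abs_deriv_of_monotoneOn hx₀.1 (hcont.mono hleft_subset) hmono fun x hx =>
      neg_neg f ▸ (hdiff x ⟨hx.1, hx.2.trans_le hx₀.2⟩).neg
  have hright : ∫ x in x₀..b, |deriv f x| = f x₀ - f b := by
    have hneg := integral_abs_deriv_of_monotoneOn hx₀.2 (hcont.mono hright_subset).neg hanti.neg
      fun x hx => hdiff x ⟨hx₀.1.trans_lt hx.1, hx.2⟩
    simpa only [deriv.neg', abs_neg, Pi.neg_apply, neg_sub_neg] using hneg
  have hint := (intervalIntegrable_deriv_of_concaveOn_of_isMaxOn hf hx₀ hmax).abs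
  rw [← intervalIntegral.integral_add_adjacent_intervals
    (hint.mono_set (uIcc_subset_uIcc_left (Icc_subset_uIcc hx₀)))
    (hint.mono_set (uIcc_subset_uIcc_right (Icc_subset_uIcc hx₀))), hleft, hright]
  ring

end Interval

section HermiteHadamard

section Segment

variable {E : Type*} [AddCommGroup E] [Module ℝ E] {s : Set E} {f : E → ℝ} {a b : E}

theorem isAffineOnSegment_self : IsAffineOnSegment f a a := fun t _ => by
  simp only [← add_smul, ← add_mul, sub_add_cancel, one_smul, one_mul]

theorem concaveOn_comp_segment (hf : ConcaveOn ℝ s f) (ha : a ∈ s) (hb : b ∈ s) :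
    ConcaveOn ℝ (Icc (0 : ℝ) 1) fun t : ℝ => f ((1 - t) • a + t • b) := by
  have hcomp := (hf.comp_affineMap (AffineMap.lineMap a b)).subset
    (fun t ht => hf.1.lineMap_mem ha hb ht) (convex_Icc (0 : ℝ) 1)
  simpa only [Function.comp_def, AffineMap.lineMap_apply_module] using hcomp

theorem intervalIntegrable_comp_segment (hf : ConcaveOn ℝ s f) (ha : a ∈ s) (hb : b ∈ s) :
    IntervalIntegrable (fun t : ℝ => f ((1 - t) • a + t • b)) volume 0 1 :=
  intervalIntegrable_of_concaveOn <| by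
    simpa only [uIcc_of_le zero_le_one] using concaveOn_comp_segment hf ha hb

theorem integral_chord (p q : ℝ) : ∫ t in (0 : ℝ)..1, ((1 - t) * p + t * q) = (p + q) / 2 := by
  have hline : ∀ t : ℝ, (1 - t) * p + t * q = p + t * (q - p) := fun t => by ring
  have hint : IntervalIntegrable (fun t : ℝ => t * (q - p)) volume 0 1 :=
    Continuous.intervalIntegrable (by fun_prop) _ _
  simp only [hline]
  rw [intervalIntegral.integral_add intervalIntegrable_const hint, intervalIntegral.integral_const,
    intervalIntegral.integral_mul_const, integral_id, smul_eq_mul]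
  ring

theorem chord_le_comp_segment (hf : ConcaveOn ℝ s f) (ha : a ∈ s) (hb : b ∈ s) {t : ℝ}
    (ht : t ∈ Icc (0 : ℝ) 1) : (1 - t) * f a + t * f b ≤ f ((1 - t) • a + t • b) :=
  hf.2 ha hb (sub_nonneg.2 ht.2) ht.1 (sub_add_cancel 1 t)

theorem half_add_le_integral_comp_segment (hf : ConcaveOn ℝ s f) (ha : a ∈ s) (hb : b ∈ s) :
    (f a + f b) / 2 ≤ ∫ t in (0 : ℝ)..1, f ((1 - t) • a + t • b) := by
  rw [← integral_chord]
  exact intervalIntegral.integral_mono_on zero_le_one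
    (Continuous.intervalIntegrable (by fun_prop) _ _)
    (intervalIntegrable_comp_segment hf ha hb) fun t ht => chord_le_comp_segment hf ha hb ht

theorem integral_comp_segment_eq_half_add_iff (hf : ConcaveOn ℝ s f) (ha : a ∈ s) (hb : b ∈ s) :
    ∫ t in (0 : ℝ)..1, f ((1 - t) • a + t • b) = (f a + f b) / 2 ↔ IsAffineOnSegment f a b := by
  have hchord : Continuous fun t : ℝ => (1 - t) * f a + t * f b := by fun_prop
  constructor
  · intro h
    have hae : (fun t : ℝ => (1 - t) * f a + t * f b) =ᵐ[volume.restrict (Ioc 0 1)]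
        fun t => f ((1 - t) • a + t • b) := by
      rw [← integral_eq_iff_of_ae_le (hchord.intervalIntegrable 0 1).1
        (intervalIntegrable_comp_segment hf ha hb).1,
        ← intervalIntegral.integral_of_le zero_le_one,
        ← intervalIntegral.integral_of_le zero_le_one, h, integral_chord]
      exact ae_restrict_of_forall_mem measurableSet_Ioc
        fun t ht => chord_le_comp_segment hf ha hb (Ioc_subset_Icc_self ht)
    have hcont : ContinuousOn (fun t : ℝ => f ((1 - t) • a + t • b)) (Ioo 0 1) := by
      simpa only [interior_Icc] using (concaveOn_comp_segment hf ha hb).continuousOn_interior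
    rw [← restrict_Ioo_eq_restrict_Ioc] at hae
    have hIoo := Measure.eqOn_Ioo_of_ae_eq volume hae hchord.continuousOn hcont
    intro t ht
    rcases eq_endpoints_or_mem_Ioo_of_mem_Icc ht with rfl | rfl | ht
    · simp
    · simp
    · exact (hIoo ht).symm
  · intro h
    rw [← integral_chord]
    exact intervalIntegral.integral_congr (uIcc_of_le (zero_le_one' ℝ) ▸ h)

end Segment

variable {f : ℝ → ℝ} {s : Set ℝ} {a b y : ℝ}

theorem integral_eq_mul_integral_comp_segment :
    ∫ x in a..b, f x = (b - a) * ∫ t in (0 : ℝ)..1, f ((1 - t) • a + t • b) := by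
  have hparam : ∀ t : ℝ, (1 - t) • a + t • b = (b - a) * t + a := fun t => by
    simp only [smul_eq_mul]
    ring
  simp only [hparam]
  rw [← smul_eq_mul, intervalIntegral.smul_integral_comp_mul_add, mul_zero, mul_one, zero_add,
    sub_add_cancel]

theorem mul_half_add_le_integral (hf : ConcaveOn ℝ (Icc a b) f) (hab : a ≤ b) :
    (b - a) * ((f a + f b) / 2) ≤ ∫ x in a..b, f x := by
  rw [integral_eq_mul_integral_comp_segment]
  exact mul_le_mul_of_nonneg_left (half_add_le_integral_comp_segment hf (left_mem_Icc.2 hab)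
    (right_mem_Icc.2 hab)) (sub_nonneg.2 hab)

theorem integral_eq_mul_half_add_iff (hf : ConcaveOn ℝ s f) (ha : a ∈ s) (hb : b ∈ s) :
    ∫ x in a..b, f x = (b - a) * ((f a + f b) / 2) ↔ IsAffineOnSegment f a b := by
  rcases eq_or_ne a b with rfl | hne
  · simp [isAffineOnSegment_self]
  · rw [integral_eq_mul_integral_comp_segment, mul_right_inj' (sub_ne_zero.2 hne.symm),
      integral_comp_segment_eq_half_add_iff hf ha hb]

theorem integral_eq_add_mul_half_add_iff (hf : ConcaveOn ℝ (Icc a b) f) (hy : y ∈ Icc a b) :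
    ∫ x in a..b, f x = (y - a) * ((f a + f y) / 2) + (b - y) * ((f y + f b) / 2) ↔
      IsAffineOnSegment f y a ∧ IsAffineOnSegment f y b := by
  have hab : a ≤ b := hy.1.trans hy.2
  have hint : IntervalIntegrable f volume a b :=
    intervalIntegrable_of_concaveOn (by rwa [uIcc_of_le hab])
  have hleft := mul_half_add_le_integral
    (hf.subset (Icc_subset_Icc_right hy.2) (convex_Icc a y)) hy.1
  have hright := mul_half_add_le_integral
    (hf.subset (Icc_subset_Icc_left hy.1) (convex_Icc y b)) hy.2
  rw [← integral_eq_mul_half_add_iff hf hy (left_mem_Icc.2 hab),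
    ← integral_eq_mul_half_add_iff hf hy (right_mem_Icc.2 hab),
    intervalIntegral.integral_symm a y,
    ← intervalIntegral.integral_add_adjacent_intervals
      (hint.mono_set (uIcc_subset_uIcc_left (Icc_subset_uIcc hy)))
      (hint.mono_set (uIcc_subset_uIcc_right (Icc_subset_uIcc hy)))]
  constructor
  · intro h
    constructor <;> linarith
  · rintro ⟨hleft_eq, hright_eq⟩
    linarith

end HermiteHadamard

section FiberMax

theorem fiberMax_of_notMem {E F : Type*} {u : E × F → ℝ} {Ω : Set (E × F)} {y : F}
    (hy : y ∉ Prod.snd '' Ω) : fiberMax u Ω y = 0 := by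
  have hempty : {q ∈ Ω | q.2 = y} = ∅ := eq_empty_of_forall_notMem fun q hq => hy ⟨q, hq⟩
  rw [fiberMax, hempty, image_empty, Real.sSup_empty]

section Topology

variable {E F : Type*} [TopologicalSpace E] [TopologicalSpace F] [T1Space F]
  {u : E × F → ℝ} {Ω : Set (E × F)}

theorem isGreatest_fiberMax (hΩ : IsCompact Ω) (hu : ContinuousOn u Ω) {y : F}
    (hy : y ∈ Prod.snd '' Ω) : IsGreatest (u '' {q ∈ Ω | q.2 = y}) (fiberMax u Ω y) := by
  have hcompact : IsCompact {q ∈ Ω | q.2 = y} :=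
    hΩ.inter_right (isClosed_singleton.preimage continuous_snd)
  have hne : {q ∈ Ω | q.2 = y}.Nonempty := hy
  exact (hcompact.image_of_continuousOn (hu.mono (sep_subset Ω _))).isGreatest_sSup (hne.image u)

theorem exists_eq_fiberMax (hΩ : IsCompact Ω) (hu : ContinuousOn u Ω) {y : F}
    (hy : y ∈ Prod.snd '' Ω) : ∃ q ∈ Ω, q.2 = y ∧ u q = fiberMax u Ω y := by
  obtain ⟨q, ⟨hqΩ, hqy⟩, hq⟩ := (isGreatest_fiberMax hΩ hu hy).1
  exact ⟨q, hqΩ, hqy, hq⟩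

theorem le_fiberMax (hΩ : IsCompact Ω) (hu : ContinuousOn u Ω) {q : E × F}
    (hq : q ∈ Ω) : u q ≤ fiberMax u Ω q.2 :=
  (isGreatest_fiberMax hΩ hu (mem_image_of_mem _ hq)).2 ⟨q, ⟨hq, rfl⟩, rfl⟩

theorem eq_fiberMax_iff (hΩ : IsCompact Ω) (hu : ContinuousOn u Ω) {q : E × F}
    (hq : q ∈ Ω) : u q = fiberMax u Ω q.2 ↔ ∀ r ∈ Ω, r.2 = q.2 → u r ≤ u q := by
  constructor
  · intro h r hr hrq
    rw [h, ← hrq]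
    exact le_fiberMax hΩ hu hr
  · intro h
    obtain ⟨r, hr, hrq, hru⟩ := exists_eq_fiberMax hΩ hu (mem_image_of_mem _ hq)
    exact (le_fiberMax hΩ hu hq).antisymm (hru ▸ h r hr hrq)

theorem fiberMax_eq_zero_of_notMem_interior (hΩ : IsCompact Ω) (hu : ContinuousOn u Ω)
    (hzero : ∀ z ∈ frontier Ω, u z = 0) {y : F} (hy : y ∉ interior (Prod.snd '' Ω)) :
    fiberMax u Ω y = 0 := by
  by_cases hyΩ : y ∈ Prod.snd '' Ω
  · obtain ⟨q, hq, rfl, hqu⟩ := exists_eq_fiberMax hΩ hu hyΩ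
    rw [← hqu]
    exact hzero q ⟨subset_closure hq, fun hqi =>
      hy (isOpenMap_snd.image_interior_subset Ω (mem_image_of_mem _ hqi))⟩
  · exact fiberMax_of_notMem hyΩ

end Topology

section Concave

variable {E F : Type*} [AddCommGroup E] [Module ℝ E] [TopologicalSpace E] [AddCommGroup F]
  [Module ℝ F] [TopologicalSpace F] [T1Space F] {u : E × F → ℝ} {Ω : Set (E × F)}

theorem concaveOn_fiberMax (hΩ : IsCompact Ω) (hu : ContinuousOn u Ω)
    (hconc : ConcaveOn ℝ Ω u) : ConcaveOn ℝ (Prod.snd '' Ω) (fiberMax u Ω) := by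
  refine ⟨hconc.1.linear_image (LinearMap.snd ℝ E F), fun y₁ hy₁ y₂ hy₂ α β hα hβ hαβ => ?_⟩
  obtain ⟨q₁, hq₁, rfl, hu₁⟩ := exists_eq_fiberMax hΩ hu hy₁
  obtain ⟨q₂, hq₂, rfl, hu₂⟩ := exists_eq_fiberMax hΩ hu hy₂
  rw [← hu₁, ← hu₂]
  exact (hconc.2 hq₁ hq₂ hα hβ hαβ).trans (le_fiberMax hΩ hu (hconc.1 hq₁ hq₂ hα hβ hαβ))

theorem isAffineOnSegment_fiberMax_iff (hΩ : IsCompact Ω) (hu : ContinuousOn u Ω)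
    (hconc : ConcaveOn ℝ Ω u) {z p : E × F} (hz : z ∈ Ω) (hp : p ∈ Ω) :
    (IsAffineOnSegment (fiberMax u Ω) z.2 p.2 ∧ u z = fiberMax u Ω z.2 ∧ u p = fiberMax u Ω p.2) ↔
      IsAffineOnSegment u z p ∧ IsFiberMaxOnSegment u Ω z p := by
  have hmem : ∀ t ∈ Icc (0 : ℝ) 1, (1 - t) • z + t • p ∈ Ω := fun t ht =>
    hconc.1 hz hp (sub_nonneg.2 ht.2) ht.1 (sub_add_cancel 1 t)
  have hfiber : IsFiberMaxOnSegment u Ω z p ↔ ∀ t ∈ Icc (0 : ℝ) 1,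
      u ((1 - t) • z + t • p) = fiberMax u Ω ((1 - t) • z.2 + t • p.2) :=
    forall₂_congr fun t ht => (eq_fiberMax_iff hΩ hu (hmem t ht)).symm
  rw [hfiber]
  constructor
  · rintro ⟨haff, hz_max, hp_max⟩
    have heq : ∀ t ∈ Icc (0 : ℝ) 1,
        u ((1 - t) • z + t • p) = fiberMax u Ω ((1 - t) • z.2 + t • p.2) := by
      intro t ht
      have hchord := chord_le_comp_segment hconc hz hp ht
      rw [hz_max, hp_max, ← haff t ht] at hchord
      exact (le_fiberMax hΩ hu (hmem t ht)).antisymm hchord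
    exact ⟨fun t ht => by rw [heq t ht, haff t ht, hz_max, hp_max], heq⟩
  · rintro ⟨haff, heq⟩
    have hz_max : u z = fiberMax u Ω z.2 := by simpa using heq 0 (left_mem_Icc.2 zero_le_one)
    have hp_max : u p = fiberMax u Ω p.2 := by simpa using heq 1 (right_mem_Icc.2 zero_le_one)
    exact ⟨fun t ht => by rw [← heq t ht, haff t ht, hz_max, hp_max], hz_max, hp_max⟩

end Concave

end FiberMax

section Slice

theorem mk_mem_frontier_of_notMem_interior_preimage {E F : Type*} [TopologicalSpace E]
    [TopologicalSpace F] {Ω : Set (E × F)} {x : E} {y : F} (hx : (x, y) ∈ Ω)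
    (hx_int : x ∉ interior ((fun x => (x, y)) ⁻¹' Ω)) : (x, y) ∈ frontier Ω :=
  ⟨subset_closure hx, fun hint =>
    hx_int (preimage_interior_subset_interior_preimage (by fun_prop) hint)⟩

theorem exists_isMaxOn_slice {E F : Type*} [TopologicalSpace E] [TopologicalSpace F] [T1Space F]
    {Ω : Set (E × F)} {u : E × F → ℝ} {y : F} (hΩ : IsCompact Ω) (hu : ContinuousOn u Ω)
    (hy : y ∈ Prod.snd '' Ω) : ∃ x₀ ∈ (fun x => (x, y)) ⁻¹' Ω,
      IsMaxOn (fun x => u (x, y)) ((fun x => (x, y)) ⁻¹' Ω) x₀ ∧ u (x₀, y) = fiberMax u Ω y := by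
  obtain ⟨⟨x₀, _⟩, hx₀, rfl, hmax⟩ := exists_eq_fiberMax hΩ hu hy
  exact ⟨x₀, hx₀, fun x hx => (le_fiberMax hΩ hu hx).trans_eq hmax.symm, hmax⟩

theorem preimage_mk_eq_empty_of_notMem_image_snd {E F : Type*} {Ω : Set (E × F)} {y : F}
    (hy : y ∉ Prod.snd '' Ω) : (fun x => (x, y)) ⁻¹' Ω = ∅ :=
  eq_empty_of_forall_notMem fun x hx => hy ⟨(x, y), hx, rfl⟩

theorem concaveOn_slice {E F : Type*} [AddCommGroup E] [Module ℝ E] [AddCommGroup F] [Module ℝ F]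
    {Ω : Set (E × F)} {u : E × F → ℝ} {y : F} (hconc : ConcaveOn ℝ Ω u) :
    ConcaveOn ℝ ((fun x => (x, y)) ⁻¹' Ω) fun x => u (x, y) := by
  have hline : ∀ x₁ x₂ : E, ∀ α β : ℝ, α + β = 1 →
      α • (x₁, y) + β • (x₂, y) = (α • x₁ + β • x₂, y) := fun x₁ x₂ α β hαβ => by
    simp [← add_smul, hαβ]
  refine ⟨fun x₁ hx₁ x₂ hx₂ α β hα hβ hαβ => ?_, fun x₁ hx₁ x₂ hx₂ α β hα hβ hαβ => ?_⟩
  · simpa only [mem_preimage, hline _ _ _ _ hαβ] using hconc.1 hx₁ hx₂ hα hβ hαβ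
  · simpa only [hline _ _ _ _ hαβ] using hconc.2 hx₁ hx₂ hα hβ hαβ

variable {F : Type*} [TopologicalSpace F] [T2Space F] [AddCommGroup F] [Module ℝ F]
  {Ω : Set (ℝ × F)} {u : ℝ × F → ℝ} {y : F}

theorem exists_slice_eq_Icc (hΩ : IsCompact Ω) (hconv : Convex ℝ Ω) (hy : y ∈ Prod.snd '' Ω) :
    ∃ a b : ℝ, a ≤ b ∧ (fun x => (x, y)) ⁻¹' Ω = Icc a b := by
  have hcompact : IsCompact ((fun x : ℝ => (x, y)) ⁻¹' Ω) :=
    (hΩ.image continuous_fst).of_isClosed_subset (hΩ.isClosed.preimage (by fun_prop))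
      fun x hx => ⟨(x, y), hx, rfl⟩
  have hconv_slice := (concaveOn_slice (y := y) (concaveOn_const (0 : ℝ) hconv)).1
  have hne : ((fun x : ℝ => (x, y)) ⁻¹' Ω).Nonempty := by
    obtain ⟨q, hq, rfl⟩ := hy
    exact ⟨q.1, hq⟩
  have hIcc := eq_Icc_of_connected_compact ⟨hne, hconv_slice.isPreconnected⟩ hcompact
  exact ⟨_, _, nonempty_Icc.1 (hIcc ▸ hne), hIcc⟩

theorem integrableOn_deriv_slice (hΩ : IsCompact Ω) (hu : ContinuousOn u Ω)
    (hconc : ConcaveOn ℝ Ω u) :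
    IntegrableOn (deriv fun x => u (x, y)) ((fun x => (x, y)) ⁻¹' Ω) := by
  by_cases hy : y ∈ Prod.snd '' Ω
  · obtain ⟨a, b, hab, hslice⟩ := exists_slice_eq_Icc hΩ hconc.1 hy
    obtain ⟨x₀, hx₀, hmax, -⟩ := exists_isMaxOn_slice hΩ hu hy
    have hconc_slice := concaveOn_slice (y := y) hconc
    rw [hslice] at hx₀ hmax hconc_slice ⊢
    rw [← intervalIntegrable_iff_integrableOn_Icc_of_le hab]
    exact intervalIntegrable_deriv_of_concaveOn_of_isMaxOn hconc_slice hx₀ hmax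
  · rw [preimage_mk_eq_empty_of_notMem_image_snd hy]
    exact integrableOn_empty

theorem setIntegral_abs_deriv_slice (hΩ : IsCompact Ω) (hu : ContinuousOn u Ω)
    (hconc : ConcaveOn ℝ Ω u) (hzero : ∀ z ∈ frontier Ω, u z = 0) :
    ∫ x in (fun x => (x, y)) ⁻¹' Ω, |deriv (fun x => u (x, y)) x| = 2 * fiberMax u Ω y := by
  by_cases hy : y ∈ Prod.snd '' Ω
  · obtain ⟨a, b, hab, hslice⟩ := exists_slice_eq_Icc hΩ hconc.1 hy
    obtain ⟨x₀, hx₀, hmax, hx₀_eq⟩ := exists_isMaxOn_slice hΩ hu hy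
    have hconc_slice := concaveOn_slice (y := y) hconc
    have hcont : ContinuousOn (fun x : ℝ => u (x, y)) ((fun x => (x, y)) ⁻¹' Ω) :=
      hu.comp (by fun_prop) fun x hx => hx
    have hend : ∀ x ∈ Icc a b, x ∉ Ioo a b → u (x, y) = 0 := fun x hx hx_end =>
      hzero _ (mk_mem_frontier_of_notMem_interior_preimage (hslice.symm.subset hx)
        (by rwa [hslice, interior_Icc]))
    rw [hslice] at hx₀ hmax hconc_slice hcont ⊢
    rw [integral_Icc_eq_integral_Ioc, ← intervalIntegral.integral_of_le hab,
      integral_abs_deriv_of_concaveOn hcont hconc_slice hx₀ hmax,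
      hend a (left_mem_Icc.2 hab) (by simp), hend b (right_mem_Icc.2 hab) (by simp), hx₀_eq]
    ring
  · rw [preimage_mk_eq_empty_of_notMem_image_snd hy, setIntegral_empty,
      fiberMax_of_notMem hy, mul_zero]

end Slice

section Fubini

variable {F : Type*} [NormedAddCommGroup F] [NormedSpace ℝ F] [FiniteDimensional ℝ F]
  [MeasurableSpace F] [BorelSpace F] (μ : Measure F) [μ.IsAddHaarMeasure]
  {Ω : Set (ℝ × F)} {u : ℝ × F → ℝ}

theorem integrable_fiberMax {E : Type*} [AddCommGroup E] [Module ℝ E] [TopologicalSpace E]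
    {Ω : Set (E × F)} {u : E × F → ℝ} (hΩ : IsCompact Ω) (hu : ContinuousOn u Ω)
    (hconc : ConcaveOn ℝ Ω u) : Integrable (fiberMax u Ω) μ := by
  obtain ⟨C, hC⟩ := hΩ.exists_bound_of_continuousOn hu
  have hsupport : Function.support (fiberMax u Ω) ⊆ Prod.snd '' Ω := fun y hy => by
    contrapose! hy
    simpa using fiberMax_of_notMem hy
  refine (integrableOn_iff_integrable_of_support_subset hsupport).1
    (integrableOn_of_concaveOn_of_abs_le (hΩ.image continuous_snd).isBounded
      (concaveOn_fiberMax hΩ hu hconc) (C := C) fun y hy => ?_)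
  obtain ⟨q, hq, -, hqu⟩ := exists_eq_fiberMax hΩ hu hy
  exact hqu ▸ hC q hq

theorem ae_ae_fderiv_eq_deriv_slice (hconc : ConcaveOn ℝ Ω u) :
    ∀ᵐ y ∂μ, ∀ᵐ x : ℝ, (x, y) ∈ Ω →
      fderiv ℝ u (x, y) (1, 0) = deriv (fun x => u (x, y)) x := by
  have hdiff : ∀ᵐ q ∂(μ.prod (volume : Measure ℝ)),
      q.swap ∈ Ω → DifferentiableAt ℝ u q.swap :=
    Measure.measurePreserving_swap.quasiMeasurePreserving.ae
      (ae_differentiableAt_of_concaveOn (volume.prod μ) hconc)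
  filter_upwards [Measure.ae_ae_of_ae_prod hdiff] with y hy
  filter_upwards [hy] with x hx hxΩ
  have hline : HasDerivAt (fun x : ℝ => (x, y)) (1, 0) x :=
    (hasDerivAt_id x).prodMk (hasDerivAt_const x y)
  exact ((hx hxΩ).hasFDerivAt.comp_hasDerivAt x hline).deriv.symm

theorem ae_indicator_abs_fderiv_slice (hconc : ConcaveOn ℝ Ω u) :
    ∀ᵐ y ∂μ, (fun x : ℝ => Ω.indicator (fun z => |fderiv ℝ u z (1, 0)|) (x, y)) =ᵐ[volume]
      ((fun x => (x, y)) ⁻¹' Ω).indicator fun x => |deriv (fun x => u (x, y)) x| := by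
  filter_upwards [ae_ae_fderiv_eq_deriv_slice μ hconc] with y hy
  filter_upwards [hy] with x hx
  by_cases hxΩ : (x, y) ∈ Ω
  · rw [indicator_of_mem hxΩ, indicator_of_mem (by exact hxΩ), hx hxΩ]
  · rw [indicator_of_notMem hxΩ, indicator_of_notMem (by exact hxΩ)]

theorem setIntegral_abs_fderiv_eq_two_mul_integral_fiberMax (hΩ : IsCompact Ω)
    (hu : ContinuousOn u Ω) (hconc : ConcaveOn ℝ Ω u) (hzero : ∀ z ∈ frontier Ω, u z = 0) :
    ∫ z in Ω, |fderiv ℝ u z (1, 0)| ∂(volume.prod μ) = 2 * ∫ y, fiberMax u Ω y ∂μ := by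
  set g := Ω.indicator fun z => |fderiv ℝ u z (1, 0)|
  have hg_meas : Measurable g :=
    (measurable_fderiv_apply_const ℝ u (1, 0)).abs.indicator hΩ.measurableSet
  have hg_nonneg : ∀ z, 0 ≤ g z := indicator_nonneg fun z _ => abs_nonneg _
  have hslice_meas : ∀ y : F, MeasurableSet ((fun x : ℝ => (x, y)) ⁻¹' Ω) := fun y =>
    measurable_prodMk_right hΩ.measurableSet
  have hg_slice := ae_indicator_abs_fderiv_slice μ hconc
  have hg_integral : ∀ᵐ y ∂μ, ∫ x, g (x, y) = 2 * fiberMax u Ω y := by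
    filter_upwards [hg_slice] with y hy
    rw [integral_congr_ae hy, integral_indicator (hslice_meas y),
      setIntegral_abs_deriv_slice hΩ hu hconc hzero]
  have hg_int : Integrable g (volume.prod μ) := by
    rw [integrable_prod_iff' hg_meas.aestronglyMeasurable]
    constructor
    · filter_upwards [hg_slice] with y hy
      exact ((integrable_indicator_iff (hslice_meas y)).2
        (integrableOn_deriv_slice hΩ hu hconc).abs).congr hy.symm
    · simp only [Real.norm_of_nonneg (hg_nonneg _)]
      exact ((integrable_fiberMax μ hΩ hu hconc).const_mul 2).congr
        (hg_integral.mono fun _ => Eq.symm)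
  rw [← integral_indicator hΩ.measurableSet, integral_prod_symm _ hg_int,
    integral_congr_ae hg_integral, integral_const_mul]

end Fubini

section Plane

variable {Ω : Set (ℝ × ℝ)} {u : ℝ × ℝ → ℝ} {c d : ℝ}

theorem L1N_ux_eq_two_mul_integral_fiberMax (hΩ : IsCompact Ω) (hu : ContinuousOn u Ω)
    (hconc : ConcaveOn ℝ Ω u) (hzero : ∀ z ∈ frontier Ω, u z = 0)
    (hproj : Prod.snd '' Ω = Icc c d) (hcd : c ≤ d) :
    L1N Ω (ux u) = 2 * ∫ y in c..d, fiberMax u Ω y := by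
  have hcompl : ∀ y ∉ Icc c d, fiberMax u Ω y = 0 := fun y hy =>
    fiberMax_of_notMem (hproj ▸ hy)
  rw [intervalIntegral.integral_of_le hcd, ← integral_Icc_eq_integral_Ioc,
    setIntegral_eq_integral_of_forall_compl_eq_zero hcompl]
  exact setIntegral_abs_fderiv_eq_two_mul_integral_fiberMax volume hΩ hu hconc hzero

theorem L1N_ux_eq_mul_fiberMax_iff (hΩ : IsCompact Ω) (hu : ContinuousOn u Ω)
    (hconc : ConcaveOn ℝ Ω u) (hzero : ∀ z ∈ frontier Ω, u z = 0)
    (hproj : Prod.snd '' Ω = Icc c d) {y : ℝ} (hy : y ∈ Icc c d) :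
    L1N Ω (ux u) = (d - c) * fiberMax u Ω y ↔
      IsAffineOnSegment (fiberMax u Ω) y c ∧ IsAffineOnSegment (fiberMax u Ω) y d := by
  have hc : fiberMax u Ω c = 0 :=
    fiberMax_eq_zero_of_notMem_interior hΩ hu hzero (by simp [hproj])
  have hd : fiberMax u Ω d = 0 :=
    fiberMax_eq_zero_of_notMem_interior hΩ hu hzero (by simp [hproj])
  rw [← integral_eq_add_mul_half_add_iff (hproj ▸ concaveOn_fiberMax hΩ hu hconc) hy, hc, hd,
    L1N_ux_eq_two_mul_integral_fiberMax hΩ hu hconc hzero hproj (hy.1.trans hy.2)]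
  constructor <;> intro h <;> linarith

theorem stmt_3_general (hΩ : IsCompact Ω) (hu : ContinuousOn u Ω) (hconc : ConcaveOn ℝ Ω u)
    (hzero : ∀ z ∈ frontier Ω, u z = 0) (hproj : Prod.snd '' Ω = Icc c d) {M : ℝ}
    (hM : IsGreatest (u '' Ω) M) :
    L1N Ω (ux u) = (d - c) * M ↔
      ∃ z ∈ Ω, ∃ cp ∈ Ω, ∃ dp ∈ Ω, u z = M ∧ cp.2 = c ∧ dp.2 = d ∧
        IsAffineOnSegment u z cp ∧ IsAffineOnSegment u z dp ∧
        IsFiberMaxOnSegment u Ω z cp ∧ IsFiberMaxOnSegment u Ω z dp := by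
  have hsnd : ∀ {z}, z ∈ Ω → z.2 ∈ Icc c d := fun hz => hproj ▸ mem_image_of_mem _ hz
  have hsegment {z p : ℝ × ℝ} (hz : z ∈ Ω) (hp : p ∈ Ω) :=
    isAffineOnSegment_fiberMax_iff hΩ hu hconc hz hp
  have hmul {z : ℝ × ℝ} (hz : z ∈ Ω) := L1N_ux_eq_mul_fiberMax_iff hΩ hu hconc hzero hproj (hsnd hz)
  constructor
  · intro h
    obtain ⟨z, hz, rfl⟩ := hM.1
    have hz_max : u z = fiberMax u Ω z.2 :=
      (eq_fiberMax_iff hΩ hu hz).2 fun q hq _ => hM.2 (mem_image_of_mem u hq)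
    have hcd : c ≤ d := (hsnd hz).1.trans (hsnd hz).2
    obtain ⟨cp, hcp, rfl, hcp_max⟩ := exists_eq_fiberMax hΩ hu (hproj ▸ left_mem_Icc.2 hcd)
    obtain ⟨dp, hdp, rfl, hdp_max⟩ := exists_eq_fiberMax hΩ hu (hproj ▸ right_mem_Icc.2 hcd)
    rw [hz_max, hmul hz] at h
    obtain ⟨haff_c, hfib_c⟩ := (hsegment hz hcp).1 ⟨h.1, hz_max, hcp_max⟩
    obtain ⟨haff_d, hfib_d⟩ := (hsegment hz hdp).1 ⟨h.2, hz_max, hdp_max⟩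
    exact ⟨z, hz, cp, hcp, dp, hdp, rfl, rfl, rfl, haff_c, haff_d, hfib_c, hfib_d⟩
  · rintro ⟨z, hz, cp, hcp, dp, hdp, rfl, rfl, rfl, haff_c, haff_d, hfib_c, hfib_d⟩
    obtain ⟨hmax_c, hz_max, -⟩ := (hsegment hz hcp).2 ⟨haff_c, hfib_c⟩
    obtain ⟨hmax_d, -, -⟩ := (hsegment hz hdp).2 ⟨haff_d, hfib_d⟩
    rw [hz_max, hmul hz]
    exact ⟨hmax_c, hmax_d⟩

end Plane

/-- Theorem 3, lower bound case: `‖u_x‖₁ = w·M` holds iff there are a point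
of maximum `z` of `u`, a lower point `cp` and an upper point `dp` of `Ω` such that `u` is
affine on the segments `[z, cp]`, `[z, dp]` and every point of these segments maximizes
`u` on the horizontal section of `Ω` through it. -/
theorem stmt_3 (Ω : Set (ℝ × ℝ)) (hΩc : IsCompact Ω) (hΩconv : Convex ℝ Ω)
    (hΩint : (interior Ω).Nonempty)
    (u : ℝ × ℝ → ℝ) (hu : MemU Ω u) (hne : ∃ z ∈ Ω, u z ≠ 0)
    (c d : ℝ) (hproj : (fun z : ℝ × ℝ => z.2) '' Ω = Icc c d)
    (M : ℝ) (hM : IsGreatest (u '' Ω) M) :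
    L1N Ω (ux u) = (d - c) * M ↔
      ∃ z ∈ Ω, ∃ cp ∈ Ω, ∃ dp ∈ Ω,
        u z = M ∧ cp.2 = c ∧ dp.2 = d ∧
        (∀ t ∈ Icc (0:ℝ) 1, u ((1 - t) • z + t • cp) = (1 - t) * u z + t * u cp) ∧
        (∀ t ∈ Icc (0:ℝ) 1, u ((1 - t) • z + t • dp) = (1 - t) * u z + t * u dp) ∧
        (∀ t ∈ Icc (0:ℝ) 1, ∀ q ∈ Ω, q.2 = ((1 - t) • z + t • cp).2 →
          u q ≤ u ((1 - t) • z + t • cp)) ∧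
        (∀ t ∈ Icc (0:ℝ) 1, ∀ q ∈ Ω, q.2 = ((1 - t) • z + t • dp).2 →
          u q ≤ u ((1 - t) • z + t • dp)) :=
  stmt_3_general hΩc hu.1 hu.2.1 hu.2.2.1 hproj hM
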